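/- arXiv:quant-ph/0309121 — 3 statements merged into one kernel-verified Lean document; each statement's English description precedes it below -/
import Mathlib

section
/- Let G be a finite group with identity element e, D : G → U(m) a unitary matrix representation of G, α : G → ℂ, and A = Σ_{g ∈ G} α(g)·D(g). Let 𝒟 = diag(D(g) : g ∈ G) be the block-diagonal matrix on ℂ^{G×{1,…,m}}, let C = circ_G(α) ⊗ I_m, and let W be any unitary G×G matrix all of whose entries in the column indexed by e are equal to 1/√|G|. Set M = (W ⊗ I_m)†·𝒟†·C·𝒟·(W ⊗ I_m). Then for all i,j ∈ {1,…,m}: M_{(e,i),(e,j)} = A_{i,j}, and for every g ∈ G with g ≠ e: M_{(e,i),(g,j)} = 0 and M_{(g,i),(e,j)} = 0. In other words, M has the block form A ⊕ U with A in the block indexed by (e,e). -/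
open Matrix Kronecker

/-- The group circulant of `α : G → ℂ`. -/
def groupCirculant {G : Type*} [Group G] (α : G → ℂ) : Matrix G G ℂ :=
  Matrix.of fun g h : G => α (g⁻¹ * h)

/-- The `G`-indexed block-diagonal matrix `diag(D(g) : g ∈ G)` on `ℂ^{G×{1,…,m}}`. -/
def blockDiag {G : Type*} [Group G] [Fintype G] [DecidableEq G] {m : ℕ}
    (D : G →* Matrix.unitaryGroup (Fin m) ℂ) : Matrix (G × Fin m) (G × Fin m) ℂ :=
  Matrix.of fun p q =>
    if p.1 = q.1 then (D p.1 : Matrix (Fin m) (Fin m) ℂ) p.2 q.2 else 0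

/-- The full matrix `M = (W ⊗ I_m)† · 𝒟† · C · 𝒟 · (W ⊗ I_m)` of the generic circuit. -/
noncomputable def circuitMatrix {G : Type*} [Group G] [Fintype G] [DecidableEq G] {m : ℕ}
    (D : G →* Matrix.unitaryGroup (Fin m) ℂ) (α : G → ℂ) (W : Matrix G G ℂ) :
    Matrix (G × Fin m) (G × Fin m) ℂ :=
  (W ⊗ₖ (1 : Matrix (Fin m) (Fin m) ℂ))ᴴ * (blockDiag D)ᴴ *
    (groupCirculant α ⊗ₖ (1 : Matrix (Fin m) (Fin m) ℂ)) * blockDiag D *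
    (W ⊗ₖ (1 : Matrix (Fin m) (Fin m) ℂ))

/-!
Conjugating the circulant of `α` by `diag(D g)` gives the circulant `K` of `g ↦ α g • D g`, all of
whose rows and columns sum to `A = ∑ g, α g • D g`. A constant column `w` of `W` therefore
satisfies `K * w = w * A`, and biorthogonality of the rows of `V = Wᴴ` to the columns of `W` leaves
`A` at the diagonal position and `0` elsewhere in that column of `V * K * W`; the corresponding row
is treated symmetrically. Viewing matrices indexed by `G × Fin m` as `G × G` matrices over the
algebra of `m × m` matrices makes `W ⊗ₖ 1` a matrix of scalars.
-/

/-- The group circulant of a function with values in an arbitrary type; `groupCirculant` is the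
case of `ℂ`. It serves both for the coefficients `α` and for the algebra-valued `g ↦ α g • D g`. -/
def leftCirculant {G T : Type*} [Group G] (f : G → T) : Matrix G G T :=
  Matrix.of fun g h => f (g⁻¹ * h)

/-- The circuit matrix with entries in an `R`-algebra `S`, the blocks of `circuitMatrix` being the
entries for `S = Matrix (Fin m) (Fin m) ℂ`. Adjoints are avoided: `V` stands for `Wᴴ`, and `D g⁻¹`
for the adjoint of `D g`, so that `D` may be any representation and `S` needs no star. -/
def algebraCircuit {R S G ι : Type*} [CommSemiring R] [Semiring S] [Algebra R S] [Group G]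
    [Fintype G] [DecidableEq G] (V : Matrix ι G R) (D : G →* S) (α : G → R) (W : Matrix G ι R) :
    Matrix ι ι S :=
  V.map (algebraMap R S) * diagonal (fun g => D g⁻¹) * (leftCirculant α).map (algebraMap R S) *
    diagonal (fun g => D g) * W.map (algebraMap R S)

section ConstantSums

variable {ι κ S : Type*} [Fintype κ] [NonUnitalNonAssocSemiring S] {K : Matrix κ κ S} {A : S}

lemma mul_apply_of_row_sums_eq (hK : ∀ g, ∑ h, K g h = A) {W : Matrix κ ι S} {k : ι}
    (hW : ∀ g h, W g k = W h k) (g : κ) : (K * W) g k = A * W g k := by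
  simp_rw [Matrix.mul_apply, fun h => hW h g, ← Finset.sum_mul, hK]

lemma mul_apply_of_col_sums_eq (hK : ∀ h, ∑ g, K g h = A) {V : Matrix ι κ S} {k : ι}
    (hV : ∀ g h, V k g = V k h) (h : κ) : (V * K) k h = V k h * A := by
  simp_rw [Matrix.mul_apply, fun g => hV g h, ← Finset.mul_sum, hK]

end ConstantSums

section ScalarConjugation

variable {ι κ R S : Type*} [Fintype κ] [CommSemiring R] [Semiring S] [Algebra R S]
  {K : Matrix κ κ S} {A : S} (V : Matrix ι κ R) (W : Matrix κ ι R) {k : ι}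

lemma scalar_conj_apply_of_row_sums_eq (hK : ∀ g, ∑ h, K g h = A)
    (hW : ∀ g h, W g k = W h k) (l : ι) :
    (V.map (algebraMap R S) * K * W.map (algebraMap R S)) l k = (V * W) l k • A := by
  have hKW (g : κ) : (K * W.map (algebraMap R S)) g k = A * algebraMap R S (W g k) :=
    mul_apply_of_row_sums_eq hK (W := W.map _) (fun g h => congrArg (algebraMap R S) (hW g h)) g
  simp_rw [Matrix.mul_assoc, Matrix.mul_apply (M := V.map _), hKW, Matrix.mul_apply,
    Finset.sum_smul, Matrix.map_apply, ← Algebra.commutes, ← mul_assoc, ← map_mul,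
    Algebra.smul_def]

lemma scalar_conj_apply_of_col_sums_eq (hK : ∀ h, ∑ g, K g h = A)
    (hV : ∀ g h, V k g = V k h) (l : ι) :
    (V.map (algebraMap R S) * K * W.map (algebraMap R S)) k l = (V * W) k l • A := by
  have hVK (h : κ) : (V.map (algebraMap R S) * K) k h = algebraMap R S (V k h) * A :=
    mul_apply_of_col_sums_eq hK (V := V.map _) (fun g h => congrArg (algebraMap R S) (hV g h)) h
  simp_rw [Matrix.mul_apply (N := W.map _), hVK, Matrix.mul_apply, Finset.sum_smul,
    Matrix.map_apply, mul_assoc, ← Algebra.commutes, ← mul_assoc, ← map_mul, Algebra.smul_def]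

end ScalarConjugation

section Circulant

variable {G : Type*} [Group G] [Fintype G]

lemma sum_leftCirculant_row {S : Type*} [AddCommMonoid S] (f : G → S) (g : G) :
    ∑ h, leftCirculant f g h = ∑ x, f x :=
  Equiv.sum_comp (Equiv.mulLeft g⁻¹) f

lemma sum_leftCirculant_col {S : Type*} [AddCommMonoid S] (f : G → S) (h : G) :
    ∑ g, leftCirculant f g h = ∑ x, f x :=
  Equiv.sum_comp ((Equiv.inv G).trans (Equiv.mulRight h)) f

lemma diagonal_conj_leftCirculant {R S : Type*} [CommSemiring R] [Semiring S] [Algebra R S]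
    [DecidableEq G] (D : G →* S) (α : G → R) :
    diagonal (fun g => D g⁻¹) * (leftCirculant α).map (algebraMap R S) * diagonal (fun g => D g) =
      leftCirculant fun g => α g • D g := by
  ext g h
  simp only [Matrix.mul_diagonal, Matrix.diagonal_mul, Matrix.map_apply, leftCirculant,
    Matrix.of_apply, map_mul, Algebra.smul_def, ← Algebra.commutes, mul_assoc]

end Circulant

theorem stmt_7_general {R S G ι : Type*} [CommSemiring R] [Semiring S] [Algebra R S] [Group G]
    [Fintype G] [DecidableEq G] [DecidableEq ι] (D : G →* S) (α : G → R) {V : Matrix ι G R}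
    {W : Matrix G ι R} (hVW : V * W = 1) {k : ι} (hV : ∀ g h, V k g = V k h)
    (hW : ∀ g h, W g k = W h k) :
    algebraCircuit V D α W k k = ∑ g, α g • D g ∧
      ∀ l, l ≠ k → algebraCircuit V D α W k l = 0 ∧ algebraCircuit V D α W l k = 0 := by
  have hconj : algebraCircuit V D α W = V.map (algebraMap R S) *
      leftCirculant (fun g => α g • D g) * W.map (algebraMap R S) := by
    rw [← diagonal_conj_leftCirculant]
    simp only [algebraCircuit, Matrix.mul_assoc]
  have hcol (l : ι) : algebraCircuit V D α W l k = (1 : Matrix ι ι R) l k • ∑ g, α g • D g := by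
    rw [hconj, scalar_conj_apply_of_row_sums_eq V W (sum_leftCirculant_row _) hW, hVW]
  have hrow (l : ι) : algebraCircuit V D α W k l = (1 : Matrix ι ι R) k l • ∑ g, α g • D g := by
    rw [hconj, scalar_conj_apply_of_col_sums_eq V W (sum_leftCirculant_col _) hV, hVW]
  refine ⟨by rw [hcol, Matrix.one_apply_eq, one_smul], fun l hl => ⟨?_, ?_⟩⟩
  · rw [hrow, Matrix.one_apply_ne hl.symm, zero_smul]
  · rw [hcol, Matrix.one_apply_ne hl, zero_smul]

section Blocks

lemma kronecker_one_eq_comp {ι κ n R : Type*} [CommSemiring R] [Fintype n] [DecidableEq n]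
    (W : Matrix ι κ R) :
    W ⊗ₖ (1 : Matrix n n R) = Matrix.comp ι κ n n R (W.map (algebraMap R (Matrix n n R))) := by
  ext ⟨g, i⟩ ⟨h, j⟩
  simp [Matrix.algebraMap_matrix_apply, Matrix.one_apply]

variable {m : ℕ} {G : Type*} [Group G] [Fintype G] [DecidableEq G]
  (D : G →* Matrix.unitaryGroup (Fin m) ℂ)

lemma blockDiag_eq_comp :
    _root_.blockDiag D =
      Matrix.comp G G (Fin m) (Fin m) ℂ (diagonal fun g => (D g : Matrix (Fin m) (Fin m) ℂ)) := by
  ext ⟨g, i⟩ ⟨h, j⟩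
  by_cases hgh : g = h <;> simp [_root_.blockDiag, hgh]

lemma conjTranspose_blockDiag_eq_comp :
    (_root_.blockDiag D)ᴴ =
      Matrix.comp G G (Fin m) (Fin m) ℂ
        (diagonal fun g => (D g⁻¹ : Matrix (Fin m) (Fin m) ℂ)) := by
  ext ⟨g, i⟩ ⟨h, j⟩
  by_cases hgh : h = g
  · simp [_root_.blockDiag, hgh]
  · simp [_root_.blockDiag, hgh, Ne.symm hgh]

lemma circuitMatrix_eq_comp (α : G → ℂ) (W : Matrix G G ℂ) :
    circuitMatrix D α W = Matrix.comp G G (Fin m) (Fin m) ℂ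
      (algebraCircuit Wᴴ ((Submonoid.subtype _).comp D) α W) := by
  simp_rw [circuitMatrix, conjTranspose_kronecker, conjTranspose_one,
    conjTranspose_blockDiag_eq_comp, blockDiag_eq_comp, kronecker_one_eq_comp,
    ← Matrix.compRingEquiv_apply, ← map_mul]
  rfl

end Blocks

theorem stmt_7 {m : ℕ} {G : Type*} [Group G] [Fintype G] [DecidableEq G]
    (D : G →* Matrix.unitaryGroup (Fin m) ℂ) (α : G → ℂ)
    (A : Matrix (Fin m) (Fin m) ℂ)
    (hA : A = ∑ g : G, α g • (D g : Matrix (Fin m) (Fin m) ℂ))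
    (W : Matrix G G ℂ) (hW : W ∈ Matrix.unitaryGroup G ℂ)
    (hWcol : ∀ g : G, W g 1 = (((Real.sqrt (Fintype.card G))⁻¹ : ℝ) : ℂ)) :
    (∀ i j : Fin m, circuitMatrix D α W (1, i) (1, j) = A i j) ∧
    (∀ g : G, g ≠ 1 → ∀ i j : Fin m,
      circuitMatrix D α W (1, i) (g, j) = 0 ∧ circuitMatrix D α W (g, i) (1, j) = 0) := by
  have hcol (g h : G) : W g 1 = W h 1 := by rw [hWcol, hWcol]
  have hrow (g h : G) : Wᴴ 1 g = Wᴴ 1 h := congrArg star (hcol g h)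
  obtain ⟨hdiag, hoff⟩ := stmt_7_general ((Submonoid.subtype _).comp D) α
    (Matrix.mem_unitaryGroup_iff'.mp hW) hrow hcol
  rw [circuitMatrix_eq_comp, hA]
  exact ⟨fun i j => congrFun₂ hdiag i j, fun g hg i j =>
    ⟨congrFun₂ (hoff g hg).1 i j, congrFun₂ (hoff g hg).2 i j⟩⟩
end

section
/- Let G be a finite group with identity 1 and let D : G → U(n) be a projective unitary representation with factor set ω : G × G → ℂ (D(1) = I_n, D(g)·D(h) = ω(g,h)·D(gh), every D(g) unitary) such that the family {D(g) : g ∈ G} is linearly independent over ℂ. Suppose A is an n×n unitary matrix with A = Σ_{g ∈ G} α(g)·D(g) for coefficients α(g) ∈ ℂ. Then for all g,k ∈ G: Σ_{h ∈ G} (ω(g,h)·conj(ω(k,h)))⁻¹·α(gh)·conj(α(kh)) = 1 if g = k, and = 0 otherwise. -/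
/-!
Let `φ` be a linear functional with `φ 1 = 1` that kills every `D g` with `g ≠ 1`. The relations
`D g * D h = ω g h • D (g * h)` make the `D g` orthonormal for `φ (x * star y)`, so that
`φ (star (D g) * A * star (D h)) = (ω g h)⁻¹ * α (g * h)`. Since `A * star A = 1`, the pairing of
`star (D g) * A` with `star (D k) * A` is `φ (star (D g) * D k)`, which is `1` or `0` according to
whether `g = k`; expanding `star A * D k` in the `star (D h)` turns this into the left-hand side.
-/

section ProjectiveUnitaryRep

variable {K R G : Type*} [Field K] [Ring R] [StarRing R] [Algebra K R] [Group G]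

/-- A projective unitary representation `D` of `G` with factor set `ω`, valued in a star algebra.
With these axioms `D 1` is the scalar `ω 1 1`, possibly other than `1`. -/
structure IsProjectiveUnitaryRep (D : G → R) (ω : G → G → K) : Prop where
  mem_unitary (g : G) : D g ∈ unitary R
  mul_eq_smul (g h : G) : D g * D h = ω g h • D (g * h)

/-- A functional that reads off the component along the identity from combinations of the `D g`,
the analogue of the canonical trace on a group algebra. It is normalized at `1` rather than at
`D 1`. -/
structure IsCanonicalTrace (D : G → R) (φ : R →ₗ[K] K) : Prop where
  map_one : φ 1 = 1
  map_of_ne_one {g : G} (hg : g ≠ 1) : φ (D g) = 0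

namespace IsProjectiveUnitaryRep

variable {D : G → R} {ω : G → G → K}

lemma star_mul_self (hD : IsProjectiveUnitaryRep D ω) (g : G) : star (D g) * D g = 1 :=
  Unitary.star_mul_self_of_mem (hD.mem_unitary g)

lemma mul_star_self (hD : IsProjectiveUnitaryRep D ω) (g : G) : D g * star (D g) = 1 :=
  Unitary.mul_star_self_of_mem (hD.mem_unitary g)

lemma apply_one (hD : IsProjectiveUnitaryRep D ω) : D 1 = ω 1 1 • (1 : R) := by
  calc D 1 = D 1 * D 1 * star (D 1) := by rw [mul_assoc, hD.mul_star_self, mul_one]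
    _ = ω 1 1 • (1 : R) := by
      rw [hD.mul_eq_smul, mul_one, smul_mul_assoc, hD.mul_star_self]

lemma exists_isCanonicalTrace (hD : IsProjectiveUnitaryRep D ω) (hli : LinearIndependent K D) :
    ∃ φ : R →ₗ[K] K, IsCanonicalTrace D φ := by
  obtain ⟨coeff, hcoeff⟩ :=
    (Finsupp.linearCombination K D).exists_leftInverse_of_injective
      (LinearMap.ker_eq_bot.2 hli)
  have coeff_apply (g : G) : coeff (D g) = Finsupp.single g 1 := by
    simpa using LinearMap.congr_fun hcoeff (Finsupp.single g 1)
  refine ⟨ω 1 1 • Finsupp.lapply 1 ∘ₗ coeff, ?_, fun hg ↦ ?_⟩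
  · calc ω 1 1 • coeff 1 1 = coeff (D 1) 1 := by rw [hD.apply_one, map_smul, Finsupp.smul_apply]
      _ = 1 := by rw [coeff_apply, Finsupp.single_eq_same]
  · simp [coeff_apply, hg]

variable [Nontrivial R]

lemma factorSet_ne_zero (hD : IsProjectiveUnitaryRep D ω) (g h : G) : ω g h ≠ 0 := by
  intro hω
  have hmul : D g * D h ∈ unitary R := mul_mem (hD.mem_unitary g) (hD.mem_unitary h)
  rw [hD.mul_eq_smul, hω, zero_smul] at hmul
  simpa using Unitary.star_mul_self_of_mem hmul

lemma apply_mul (hD : IsProjectiveUnitaryRep D ω) (g h : G) :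
    D (g * h) = (ω g h)⁻¹ • (D g * D h) := by
  rw [hD.mul_eq_smul, inv_smul_smul₀ (hD.factorSet_ne_zero g h)]

lemma star_mul_apply_mul (hD : IsProjectiveUnitaryRep D ω) (g h : G) :
    star (D g) * D (g * h) = (ω g h)⁻¹ • D h := by
  rw [hD.apply_mul, mul_smul_comm, ← mul_assoc, hD.star_mul_self, one_mul]

lemma apply_mul_mul_star (hD : IsProjectiveUnitaryRep D ω) (g h : G) :
    D (g * h) * star (D h) = (ω g h)⁻¹ • D g := by
  rw [hD.apply_mul, smul_mul_assoc, mul_assoc, hD.mul_star_self, mul_one]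

lemma star_apply_mul_mul [StarRing K] [StarModule K R] (hD : IsProjectiveUnitaryRep D ω)
    (g h : G) : star (D (g * h)) * D g = star (ω g h)⁻¹ • star (D h) := by
  simpa only [star_mul, star_star, star_smul] using congrArg star (hD.star_mul_apply_mul g h)

variable {φ : R →ₗ[K] K}

lemma trace_star_mul [DecidableEq G] (hD : IsProjectiveUnitaryRep D ω)
    (hφ : IsCanonicalTrace D φ) (g k : G) :
    φ (star (D g) * D k) = if g = k then 1 else 0 := by
  split_ifs with hgk
  · rw [hgk, hD.star_mul_self, hφ.map_one]
  · have hne : g⁻¹ * k ≠ 1 := by rwa [ne_eq, inv_mul_eq_one]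
    simpa [hφ.map_of_ne_one hne] using congrArg φ (hD.star_mul_apply_mul g (g⁻¹ * k))

lemma trace_mul_star [DecidableEq G] (hD : IsProjectiveUnitaryRep D ω)
    (hφ : IsCanonicalTrace D φ) (g k : G) :
    φ (D g * star (D k)) = if g = k then 1 else 0 := by
  split_ifs with hgk
  · rw [hgk, hD.mul_star_self, hφ.map_one]
  · have hne : g * k⁻¹ ≠ 1 := by rwa [ne_eq, mul_inv_eq_one]
    simpa [hφ.map_of_ne_one hne] using congrArg φ (hD.apply_mul_mul_star (g * k⁻¹) k)

lemma trace_star_mul_mul_star [DecidableEq G] (hD : IsProjectiveUnitaryRep D ω)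
    (hφ : IsCanonicalTrace D φ) (g h l : G) :
    φ (star (D g) * D l * star (D h)) = if l = g * h then (ω g h)⁻¹ else 0 := by
  obtain ⟨m, rfl⟩ : ∃ m, l = g * m := ⟨g⁻¹ * l, (mul_inv_cancel_left g l).symm⟩
  rw [hD.star_mul_apply_mul, smul_mul_assoc, map_smul, hD.trace_mul_star hφ]
  rcases eq_or_ne m h with rfl | hmh
  · simp
  · simp [hmh]

lemma trace_star_mul_linearCombination_mul_star (hD : IsProjectiveUnitaryRep D ω)
    (hφ : IsCanonicalTrace D φ) (α : G →₀ K) (g h : G) :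
    φ (star (D g) * Finsupp.linearCombination K D α * star (D h)) =
      (ω g h)⁻¹ * α (g * h) := by
  classical
  rw [Finsupp.linearCombination_apply, Finsupp.sum, Finset.mul_sum, Finset.sum_mul, map_sum]
  simp only [mul_smul_comm, smul_mul_assoc, map_smul, hD.trace_star_mul_mul_star hφ, smul_eq_mul,
    mul_ite, mul_zero, Finset.sum_ite_eq']
  split_ifs with hgh
  · exact mul_comm _ _
  · rw [Finsupp.notMem_support_iff.1 hgh, mul_zero]

lemma map_mul_star_linearCombination_mul [StarRing K] [StarModule K R]
    (hD : IsProjectiveUnitaryRep D ω) (φ : R →ₗ[K] K) (α : G →₀ K) (X : R) (k : G) :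
    φ (X * star (Finsupp.linearCombination K D α) * D k) =
      ∑ᶠ h, star ((ω k h)⁻¹ * α (k * h)) * φ (X * star (D h)) := by
  calc φ (X * star (Finsupp.linearCombination K D α) * D k)
      = ∑ l ∈ α.support, star (α l) * φ (X * (star (D l) * D k)) := by
        simp only [Finsupp.linearCombination_apply, Finsupp.sum, star_sum, star_smul,
          Finset.mul_sum, Finset.sum_mul, mul_smul_comm, smul_mul_assoc, mul_assoc, map_sum,
          map_smul, smul_eq_mul]
    _ = ∑ᶠ l, star (α l) * φ (X * (star (D l) * D k)) := by
        refine (finsum_eq_sum_of_support_subset _ fun l hl ↦ ?_).symm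
        rw [Finset.mem_coe, Finsupp.mem_support_iff]
        intro hα
        simp [hα] at hl
    _ = ∑ᶠ h, star (α (k * h)) * φ (X * (star (D (k * h)) * D k)) :=
        (finsum_comp_equiv (Equiv.mulLeft k)).symm
    _ = ∑ᶠ h, star ((ω k h)⁻¹ * α (k * h)) * φ (X * star (D h)) := by
        simp only [hD.star_apply_mul_mul, mul_smul_comm, map_smul, smul_eq_mul, star_mul, mul_assoc]

end IsProjectiveUnitaryRep

theorem stmt_10_general [StarRing K] [StarModule K R] [DecidableEq G] {D : G → R} {ω : G → G → K}
    (hD : IsProjectiveUnitaryRep D ω) (hli : LinearIndependent K D) {A : R}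
    (hA : A * star A = 1) {α : G →₀ K} (hlin : A = Finsupp.linearCombination K D α) (g k : G) :
    ∑ᶠ h, (ω g h * star (ω k h))⁻¹ * (α (g * h) * star (α (k * h))) =
      if g = k then 1 else 0 := by
  have : Nontrivial R := ⟨D 1, 0, hli.ne_zero 1⟩
  obtain ⟨φ, hφ⟩ := hD.exists_isCanonicalTrace hli
  calc ∑ᶠ h, (ω g h * star (ω k h))⁻¹ * (α (g * h) * star (α (k * h)))
      = ∑ᶠ h, star ((ω k h)⁻¹ * α (k * h)) * φ (star (D g) * A * star (D h)) := by
        refine finsum_congr fun h ↦ ?_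
        rw [hlin, hD.trace_star_mul_linearCombination_mul_star hφ, star_mul, star_inv₀, mul_inv]
        ring
    _ = φ (star (D g) * A * star A * D k) := by
        rw [← hD.map_mul_star_linearCombination_mul, ← hlin]
    _ = φ (star (D g) * D k) := by rw [mul_assoc (star (D g)), hA, mul_one]
    _ = if g = k then 1 else 0 := hD.trace_star_mul hφ g k

end ProjectiveUnitaryRep

theorem stmt_10 {n : ℕ} {G : Type*} [Group G] [Fintype G] [DecidableEq G]
    (D : G → Matrix (Fin n) (Fin n) ℂ) (ω : G → G → ℂ)
    (hunit : ∀ g : G, D g ∈ Matrix.unitaryGroup (Fin n) ℂ)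
    (hone : D 1 = 1)
    (hmul : ∀ g h : G, D g * D h = ω g h • D (g * h))
    (hli : LinearIndependent ℂ D)
    (A : Matrix (Fin n) (Fin n) ℂ) (hA : A ∈ Matrix.unitaryGroup (Fin n) ℂ)
    (α : G → ℂ) (hlin : A = ∑ g : G, α g • D g) :
    ∀ g k : G,
      (∑ h : G, (ω g h * (starRingEnd ℂ) (ω k h))⁻¹ *
        (α (g * h) * (starRingEnd ℂ) (α (k * h)))) =
      if g = k then 1 else 0 := by
  simpa [finsum_eq_sum_of_fintype] using stmt_10_general ⟨hunit, hmul⟩ hli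
    (Matrix.mem_unitaryGroup_iff.1 hA) (α := Finsupp.equivFunOnFinite.symm α)
    (by simp [hlin, Finsupp.linearCombination_apply, Finsupp.sum_fintype])
end

section
/- Let N be a positive integer, F_N the normalized discrete Fourier transform of size N, and for α ∈ ℝ define F_{N,α} := a₀(α)·I_N + a₁(α)·F_N + a₂(α)·F_N² + a₃(α)·F_N³, where a₀(α) = (1/2)(1 + e^{iα})·cos α, a₁(α) = (1/2)(1 − i·e^{iα})·sin α, a₂(α) = (1/2)(−1 + e^{iα})·cos α, a₃(α) = (1/2)(−1 − i·e^{iα})·sin α. Then the one-parameter family satisfies the group law F_{N,α}·F_{N,β} = F_{N,α+β} for all α, β ∈ ℝ. -/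
/-- The normalized discrete Fourier transform of size `N`. -/
noncomputable def dft (N : ℕ) : Matrix (Fin N) (Fin N) ℂ :=
  Matrix.of fun k l : Fin N =>
    ((1 / Real.sqrt N : ℝ) : ℂ) *
      Complex.exp (2 * Real.pi * Complex.I * ((k.1 * l.1 : ℕ) : ℂ) / N)

noncomputable def a0 (α : ℝ) : ℂ :=
  (1 / 2) * (1 + Complex.exp (α * Complex.I)) * Real.cos α

noncomputable def a1 (α : ℝ) : ℂ :=
  (1 / 2) * (1 - Complex.I * Complex.exp (α * Complex.I)) * Real.sin α

noncomputable def a2 (α : ℝ) : ℂ :=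
  (1 / 2) * (-1 + Complex.exp (α * Complex.I)) * Real.cos α

noncomputable def a3 (α : ℝ) : ℂ :=
  (1 / 2) * (-1 - Complex.I * Complex.exp (α * Complex.I)) * Real.sin α

/-- The fractional Fourier transform
`F_{N,α} = a₀(α)·I_N + a₁(α)·F_N + a₂(α)·F_N² + a₃(α)·F_N³`. -/
noncomputable def fracDFT (N : ℕ) (α : ℝ) : Matrix (Fin N) (Fin N) ℂ :=
  a0 α • (1 : Matrix (Fin N) (Fin N) ℂ) + a1 α • dft N + a2 α • dft N ^ 2 +
    a3 α • dft N ^ 3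

/-!
The matrix `F_N` squares to the permutation matrix of `k ↦ -k`, so `F_N ^ 4 = 1`. Since `X ^ 4 - 1`
has distinct roots, a polynomial in `F_N` is determined by its values at the fourth roots of unity.
The cubic defining `F_{N,α}` takes the values `1`, `e^{iα}`, `e^{2iα}`, `e^{-iα}` at `1`, `i`, `-1`,
`-i`; each of these is a character of `α`, which is the group law on every eigenspace of `F_N`.
-/

open Polynomial

section PolynomialCalculus

variable {K A : Type*} [Field K] [Ring A] [Algebra K A]

theorem aeval_eq_aeval_of_forall_isRoot {f p q : K[X]} (hsplit : f.Splits) (hsep : f.Separable)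
    (h : ∀ z, f.IsRoot z → p.eval z = q.eval z) {x : A} (hx : aeval x f = 0) :
    aeval x p = aeval x q := by
  have hdvd : f ∣ p - q := by
    rcases eq_or_ne (p - q) 0 with hpq | hpq
    · exact hpq ▸ dvd_zero f
    refine hsplit.dvd_of_roots_le_roots hsep.ne_zero
      ((Multiset.le_iff_subset (nodup_roots hsep)).2 fun z hz => ?_)
    rw [mem_roots hpq, IsRoot.def, eval_sub, sub_eq_zero]
    exact h z (isRoot_of_mem_roots hz)
  rw [← sub_eq_zero, ← map_sub]
  exact aeval_eq_zero_of_dvd_aeval_eq_zero hdvd hx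

theorem aeval_eq_aeval_of_pow_eq_one [IsAlgClosed K] {n : ℕ} (hn : (n : K) ≠ 0) {p q : K[X]}
    (h : ∀ z : K, z ^ n = 1 → p.eval z = q.eval z) {x : A} (hx : x ^ n = 1) :
    aeval x p = aeval x q := by
  refine aeval_eq_aeval_of_forall_isRoot (f := X ^ n - 1) (IsAlgClosed.splits _)
    (X_pow_sub_one_separable_iff.2 hn) (fun z hz => h z ?_) (by simp [hx])
  simpa [sub_eq_zero] using hz

end PolynomialCalculus

section FractionalPolynomial

/-- The cubic polynomial `a₀(α) + a₁(α)·X + a₂(α)·X² + a₃(α)·X³`, whose value at `F_N` is the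
fractional Fourier transform `F_{N,α}`. -/
noncomputable def fracPoly (α : ℝ) : ℂ[X] :=
  C (a0 α) + C (a1 α) * X + C (a2 α) * X ^ 2 + C (a3 α) * X ^ 3

theorem aeval_fracPoly {A : Type*} [Ring A] [Algebra ℂ A] (x : A) (α : ℝ) :
    aeval x (fracPoly α) = a0 α • (1 : A) + a1 α • x + a2 α • x ^ 2 + a3 α • x ^ 3 := by
  simp [fracPoly, Algebra.smul_def]

theorem eval_fracPoly_of_sq_eq_one {z : ℂ} (hz : z ^ 2 = 1) (α : ℝ) :
    (fracPoly α).eval z =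
      Complex.exp (α * Complex.I) * (Real.cos α - z * Real.sin α * Complex.I) := by
  have hz3 : z ^ 3 = z := by rw [pow_succ, hz, one_mul]
  simp only [fracPoly, a0, a1, a2, a3, eval_add, eval_mul, eval_pow, eval_C, eval_X, hz, hz3]
  ring

theorem eval_fracPoly_of_sq_eq_neg_one {z : ℂ} (hz : z ^ 2 = -1) (α : ℝ) :
    (fracPoly α).eval z = Real.cos α + z * Real.sin α := by
  have hz3 : z ^ 3 = -z := by rw [pow_succ, hz, neg_one_mul]
  simp only [fracPoly, a0, a1, a2, a3, eval_add, eval_mul, eval_pow, eval_C, eval_X, hz, hz3]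
  ring

theorem eval_one_fracPoly (α : ℝ) : (fracPoly α).eval 1 = 1 := by
  rw [eval_fracPoly_of_sq_eq_one (one_pow 2), one_mul, Complex.ofReal_cos, Complex.ofReal_sin,
    Complex.cos_sub_sin_I, ← Complex.exp_add, neg_mul, add_neg_cancel, Complex.exp_zero]

theorem eval_neg_one_fracPoly (α : ℝ) :
    (fracPoly α).eval (-1) = Complex.exp (2 * α * Complex.I) := by
  rw [eval_fracPoly_of_sq_eq_one neg_one_sq, neg_one_mul, neg_mul, sub_neg_eq_add,
    Complex.ofReal_cos, Complex.ofReal_sin, Complex.cos_add_sin_I, ← Complex.exp_add, mul_assoc,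
    two_mul]

theorem eval_I_fracPoly (α : ℝ) :
    (fracPoly α).eval Complex.I = Complex.exp (α * Complex.I) := by
  rw [eval_fracPoly_of_sq_eq_neg_one Complex.I_sq, mul_comm, Complex.ofReal_cos,
    Complex.ofReal_sin, Complex.cos_add_sin_I]

theorem eval_neg_I_fracPoly (α : ℝ) :
    (fracPoly α).eval (-Complex.I) = Complex.exp (-α * Complex.I) := by
  rw [eval_fracPoly_of_sq_eq_neg_one (by rw [neg_sq, Complex.I_sq]), neg_mul, ← sub_eq_add_neg,
    mul_comm, Complex.ofReal_cos, Complex.ofReal_sin, Complex.cos_sub_sin_I]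

theorem complex_pow_four_eq_one_iff {z : ℂ} :
    z ^ 4 = 1 ↔ z = 1 ∨ z = -1 ∨ z = Complex.I ∨ z = -Complex.I := by
  rw [show 4 = 2 * 2 from rfl, pow_mul, sq_eq_one_iff, sq_eq_one_iff, ← Complex.I_sq,
    sq_eq_sq_iff_eq_or_eq_neg, or_assoc]

theorem exists_eval_fracPoly_eq_exp {z : ℂ} (hz : z ^ 4 = 1) :
    ∃ m : ℤ, ∀ α : ℝ, (fracPoly α).eval z = Complex.exp (m * α * Complex.I) := by
  rcases complex_pow_four_eq_one_iff.1 hz with rfl | rfl | rfl | rfl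
  · exact ⟨0, fun α => by simp [eval_one_fracPoly]⟩
  · exact ⟨2, fun α => by simp [eval_neg_one_fracPoly]⟩
  · exact ⟨1, fun α => by simp [eval_I_fracPoly]⟩
  · exact ⟨-1, fun α => by simp [eval_neg_I_fracPoly]⟩

theorem eval_fracPoly_mul {z : ℂ} (hz : z ^ 4 = 1) (α β : ℝ) :
    (fracPoly α * fracPoly β).eval z = (fracPoly (α + β)).eval z := by
  obtain ⟨m, hm⟩ := exists_eval_fracPoly_eq_exp hz
  rw [eval_mul, hm, hm, hm, ← Complex.exp_add, ← add_mul, ← mul_add, ← Complex.ofReal_add]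

theorem aeval_fracPoly_mul {A : Type*} [Ring A] [Algebra ℂ A] {x : A} (hx : x ^ 4 = 1)
    (α β : ℝ) :
    aeval x (fracPoly α) * aeval x (fracPoly β) = aeval x (fracPoly (α + β)) := by
  rw [← map_mul]
  exact aeval_eq_aeval_of_pow_eq_one (n := 4) (by norm_num)
    (fun _ hz => eval_fracPoly_mul hz α β) hx

end FractionalPolynomial

section FourierMatrix

variable {N : ℕ} [NeZero N]

theorem zmodFinEquiv_eq_natCast (k : Fin N) : ZMod.finEquiv N k = (k.val : ZMod N) := by
  obtain ⟨n, rfl⟩ := Nat.exists_eq_succ_of_ne_zero (NeZero.ne N)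
  exact (Fin.cast_val_eq_self k).symm

theorem dft_apply_eq_stdAddChar (k l : Fin N) :
    dft N k l = ((1 / Real.sqrt N : ℝ) : ℂ) *
      ZMod.stdAddChar (ZMod.finEquiv N k * ZMod.finEquiv N l) := by
  rw [zmodFinEquiv_eq_natCast, zmodFinEquiv_eq_natCast, ← Nat.cast_mul, ZMod.stdAddChar_apply,
    ZMod.toCircle_natCast, dft, Matrix.of_apply]

theorem dft_mul_dft_apply (k m l : Fin N) :
    dft N k m * dft N m l = (N : ℂ)⁻¹ *
      ZMod.stdAddChar (ZMod.finEquiv N m * (ZMod.finEquiv N k + ZMod.finEquiv N l)) := by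
  have hscale : ((1 / Real.sqrt N : ℝ) : ℂ) * ((1 / Real.sqrt N : ℝ) : ℂ) = (N : ℂ)⁻¹ := by
    rw [← Complex.ofReal_mul, div_mul_div_comm, Real.mul_self_sqrt (Nat.cast_nonneg N), one_mul,
      one_div, Complex.ofReal_inv, Complex.ofReal_natCast]
  rw [dft_apply_eq_stdAddChar, dft_apply_eq_stdAddChar, mul_mul_mul_comm, hscale,
    ← AddChar.map_add_eq_mul, mul_comm (ZMod.finEquiv N k), ← mul_add]

theorem dft_sq : dft N ^ 2 = (Equiv.neg (Fin N)).permMatrix ℂ := by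
  ext k l
  have hzero : ZMod.finEquiv N k + ZMod.finEquiv N l = 0 ↔ -k = l := by
    rw [← map_add, EmbeddingLike.map_eq_zero_iff, neg_eq_iff_add_eq_zero]
  calc (dft N ^ 2) k l
      = ∑ m, (N : ℂ)⁻¹ *
          ZMod.stdAddChar (ZMod.finEquiv N m * (ZMod.finEquiv N k + ZMod.finEquiv N l)) := by
        simp only [pow_two, Matrix.mul_apply, dft_mul_dft_apply]
    _ = (N : ℂ)⁻¹ * ∑ y : ZMod N,
          ZMod.stdAddChar (y * (ZMod.finEquiv N k + ZMod.finEquiv N l)) := by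
        rw [← Finset.mul_sum]
        congr 1
        exact Equiv.sum_comp (ZMod.finEquiv N).toEquiv fun y =>
          ZMod.stdAddChar (y * (ZMod.finEquiv N k + ZMod.finEquiv N l))
    _ = if -k = l then 1 else 0 := by
        rw [AddChar.sum_mulShift _ (ZMod.isPrimitive_stdAddChar N), ZMod.card]
        simp [hzero]
    _ = (Equiv.neg (Fin N)).permMatrix ℂ k l := by
        simp [PEquiv.toMatrix_apply]

theorem dft_pow_four : dft N ^ 4 = 1 := by
  have hneg : Equiv.neg (Fin N) * Equiv.neg (Fin N) = 1 := Equiv.ext neg_neg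
  rw [show 4 = 2 * 2 from rfl, pow_mul, dft_sq, pow_two, ← Matrix.permMatrix_mul, hneg,
    Matrix.permMatrix_one]

end FourierMatrix

theorem stmt_17 (N : ℕ) (hN : 0 < N) (α β : ℝ) :
    fracDFT N α * fracDFT N β = fracDFT N (α + β) := by
  have : NeZero N := ⟨hN.ne'⟩
  simp only [fracDFT, ← aeval_fracPoly]
  exact aeval_fracPoly_mul dft_pow_four α β
end
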